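/- Let σ ∈ (0,√2), T₀ > 2 large enough, and let ℓ ≥ 0 be an integer. There exists a constant C > 0 such that for all t ≤ −T₀: ∫_1^∞ r^ℓ Φ(t,r) dr ≤ C ∑_{i=1}^k (ρ_i^0(t))^ℓ (log|t|/|t|)^{σ/(2√2)}, and for every j = 1,…,k: ∫_1^∞ r^ℓ Φ(t,r) w′(r − ρ_j(t)) dr ≤ C (ρ_j^0(t))^ℓ (log|t|/|t|)^{σ/√2}. -/

import Mathlib

open Real MeasureTheory

noncomputable section

/-- The heteroclinic profile `w(s) = tanh(s/√2)`. -/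
def w (s : ℝ) : ℝ := Real.tanh (s / Real.sqrt 2)

/-- `w' `. -/
def w1 (s : ℝ) : ℝ := deriv w s

/-- `w''`. -/
def w2 (s : ℝ) : ℝ := deriv w1 s

/-- The Allen–Cahn nonlinearity `f(v) = v(1-v²)`. -/
def f (v : ℝ) : ℝ := v * (1 - v ^ 2)

/-- `f'`. -/
def f1 (v : ℝ) : ℝ := deriv f v

/-- The interaction constant `β`. -/
def β : ℝ :=
  (6 * ∫ x : ℝ, Real.exp (Real.sqrt 2 * x) * (1 - w x ^ 2) * w1 x) / ∫ x : ℝ, w1 x ^ 2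

/-- `r(y) = (1+y²)^{1/(2(N-1))}`. -/
def Rr (N : ℕ) (y : ℝ) : ℝ := (1 + y ^ 2) ^ ((1 : ℝ) / (2 * ((N : ℝ) - 1)))

/-- `b_l = -(1/√2) log((k-l)l/(2β))`. -/
def bco (k l : ℕ) : ℝ :=
  -(1 / Real.sqrt 2) * Real.log (((k : ℝ) - (l : ℝ)) * (l : ℝ) / (2 * β))

/-- `ρ⁰_j(t) = √(-2(N-1)t) + (j-(k+1)/2) η(t) + γ_j`. -/
def rho0 (N k : ℕ) (η : ℝ → ℝ) (γ : ℕ → ℝ) (j : ℕ) (t : ℝ) : ℝ :=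
  Real.sqrt (-2 * ((N : ℝ) - 1) * t) + ((j : ℝ) - ((k : ℝ) + 1) / 2) * η t + γ j

/-- `ρ_j = ρ⁰_j + h_j`. -/
def rho (N k : ℕ) (η : ℝ → ℝ) (γ : ℕ → ℝ) (h : ℕ → ℝ → ℝ) (j : ℕ) (t : ℝ) : ℝ :=
  rho0 N k η γ j t + h j t

/-- `z(t,r) = ∑_{j=1}^k (-1)^{j+1} w(r-ρ_j(t)) - 1`. -/
def zfun (N k : ℕ) (η : ℝ → ℝ) (γ : ℕ → ℝ) (h : ℕ → ℝ → ℝ) (t r : ℝ) : ℝ :=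
  (∑ j ∈ Finset.Icc 1 k, (-1 : ℝ) ^ (j + 1) * w (r - rho N k η γ h j t)) - 1

/-- The standing assumptions: `N ≥ 2`, `k ≥ 2` even, `η` solves the simple ODE with `η(-1)=0`,
and `γ` is defined through the constants `b_l`. -/
structure Setting (N k : ℕ) (η : ℝ → ℝ) (γ : ℕ → ℝ) : Prop where
  hN : 2 ≤ N
  hk : 2 ≤ k
  hkeven : Even k
  hηdiff : ∀ t ≤ (-1 : ℝ), DifferentiableAt ℝ η t
  hηode : ∀ t ≤ (-1 : ℝ),
    deriv η t + η t / (2 * t) + β * Real.exp (-Real.sqrt 2 * η t) = 0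
  hηinit : η (-1) = 0
  hγ : ∀ j : ℕ, 1 ≤ j → j ≤ k / 2 →
    γ j = -(1 / 2) * (∑ i ∈ Finset.Icc j (k - j), bco k i) ∧
    γ (k - j + 1) = (1 / 2) * (∑ i ∈ Finset.Icc j (k - j), bco k i)

/-- `h = (h_1,…,h_k)` is C¹ on `(-∞,-T]` with
`sup_{t≤-T}|h(t)| + sup_{t≤-T}(|t|/log|t|)|h'(t)| < 1`. -/
def SmallH (k : ℕ) (T : ℝ) (h : ℕ → ℝ → ℝ) : Prop :=
  (∀ j ∈ Finset.Icc 1 k, ∀ t ≤ -T, DifferentiableAt ℝ (h j) t) ∧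
  ∃ A B : ℝ, A + B < 1 ∧
    (∀ j ∈ Finset.Icc 1 k, ∀ t ≤ -T, |h j t| ≤ A) ∧
    (∀ j ∈ Finset.Icc 1 k, ∀ t ≤ -T, |t| / Real.log |t| * |deriv (h j) t| ≤ B)

/-- The weight `Φ(t,r)`, defined piecewise (with the convention `ρ⁰_{k+1} = +∞`). -/
def IsPhi (N k : ℕ) (η : ℝ → ℝ) (γ : ℕ → ℝ) (σ : ℝ) (Φ : ℝ → ℝ → ℝ) : Prop :=
  (∀ t r : ℝ, 1 < r → r ≤ (rho0 N k η γ 1 t + rho0 N k η γ 2 t) / 2 →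
      Φ t r = Real.exp (σ * (r - rho0 N k η γ 2 t))) ∧
  (∀ t r : ℝ, ∀ j : ℕ, 2 ≤ j → j < k →
      (rho0 N k η γ j t + rho0 N k η γ (j - 1) t) / 2 < r →
      r ≤ (rho0 N k η γ j t + rho0 N k η γ (j + 1) t) / 2 →
      Φ t r = Real.exp (σ * (-r + rho0 N k η γ (j - 1) t)) +
        Real.exp (σ * (r - rho0 N k η γ (j + 1) t))) ∧
  (∀ t r : ℝ, (rho0 N k η γ k t + rho0 N k η γ (k - 1) t) / 2 < r →
      Φ t r = Real.exp (σ * (-r + rho0 N k η γ (k - 1) t)))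

/-- The error term `E`. -/
def Eterm (N k : ℕ) (η : ℝ → ℝ) (γ : ℕ → ℝ) (h : ℕ → ℝ → ℝ) (t y : ℝ) : ℝ :=
  (∑ i ∈ Finset.Icc 1 k, (-1 : ℝ) ^ (i + 1) *
    (w1 (Rr N y - rho N k η γ h i t) * (deriv (rho N k η γ h i) t + ((N : ℝ) - 1) / Rr N y)
      - f (w (Rr N y - rho N k η γ h i t))
      - w2 (Rr N y - rho N k η γ h i t) / (1 + y ^ 2))) +
  f (zfun N k η γ h t (Rr N y))

/-- The set of values `|u|/Φ` over `I × (0,∞)`. -/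
def CSet (N : ℕ) (Φ : ℝ → ℝ → ℝ) (I : Set ℝ) (u : ℝ → ℝ → ℝ) : Set ℝ :=
  (fun p : ℝ × ℝ => |u p.1 p.2| / Φ p.1 (Rr N p.2)) '' (I ×ˢ Set.Ioi (0 : ℝ))

/-- The norm `‖u‖_{C_Φ(I×(0,∞))}`. -/
def CNorm (N : ℕ) (Φ : ℝ → ℝ → ℝ) (I : Set ℝ) (u : ℝ → ℝ → ℝ) : ℝ :=
  sSup (CSet N Φ I u)

/-- The divergence form elliptic operator `L`. -/
def Lop (N : ℕ) (v : ℝ → ℝ → ℝ) (t y : ℝ) : ℝ :=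
  ((N : ℝ) - 1) ^ 2 * (y ^ 2 + 1) ^ (-(1 : ℝ) / (2 * ((N : ℝ) - 1))) *
    deriv (fun s => (s ^ 2 + 1) ^ ((2 * (N : ℝ) - 3) / (2 * ((N : ℝ) - 1))) * deriv (v t) s) y

/-- `d = (d_1,…,d_k)` solves, at time `t`, the (nearly diagonal) projection system associated to
`ψ`, the profile locations `ρ`, the profile `z` and the forcing `g`. -/
def ProjSystem (N k : ℕ) (ρ : ℕ → ℝ → ℝ) (z : ℝ → ℝ → ℝ) (ψ g : ℝ → ℝ → ℝ)
    (d : ℕ → ℝ → ℝ) (t : ℝ) : Prop :=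
  ∀ j ∈ Finset.Icc 1 k,
    (∑ i ∈ Finset.Icc 1 k, d i t * ∫ y in Set.Ioi (0 : ℝ),
        w1 (Rr N y - ρ i t) * w1 (Rr N y - ρ j t) * Rr N y) =
      -deriv (ρ j) t * (∫ y in Set.Ioi (0 : ℝ), ψ t y * w2 (Rr N y - ρ j t) * Rr N y) +
      ((N : ℝ) - 1) *
        (∫ y in Set.Ioi (0 : ℝ), ψ t y * deriv (fun s => w2 (Rr N s - ρ j t) * s) y) +
      (∫ y in Set.Ioi (0 : ℝ), f1 (z t (Rr N y)) * ψ t y * w1 (Rr N y - ρ j t) * Rr N y) +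
      (∫ y in Set.Ioi (0 : ℝ), g t y * w1 (Rr N y - ρ j t) * Rr N y)

/-- The orthogonality conditions at time `t`. -/
def Orth (N k : ℕ) (ρ : ℕ → ℝ → ℝ) (ψ : ℝ → ℝ → ℝ) (t : ℝ) : Prop :=
  ∀ i ∈ Finset.Icc 1 k, (∫ y in Set.Ioi (0 : ℝ), ψ t y * w1 (Rr N y - ρ i t) * Rr N y) = 0

/-- The nonlinear term `N(ψ,h)`. -/
def Nterm (N k : ℕ) (η : ℝ → ℝ) (γ : ℕ → ℝ) (h : ℕ → ℝ → ℝ) (ψ : ℝ → ℝ → ℝ) (t y : ℝ) : ℝ :=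
  f (zfun N k η γ h t (Rr N y) + ψ t y) - f (zfun N k η γ h t (Rr N y)) -
    f1 (zfun N k η γ h t (Rr N y)) * ψ t y

/-- The norm `‖h‖_Λ = sup_{t≤-T}|h(t)| + sup_{t≤-T}(|t|/log|t|)|h'(t)|`
(with the sup norm on vectors). -/
def LamNorm (k : ℕ) (T : ℝ) (h : ℕ → ℝ → ℝ) : ℝ :=
  sSup {a : ℝ | ∃ j ∈ Finset.Icc 1 k, ∃ t ≤ -T, a = |h j t|} +
  sSup {a : ℝ | ∃ j ∈ Finset.Icc 1 k, ∃ t ≤ -T, a = |t| / Real.log |t| * |deriv (h j) t|}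

end

open Filter Topology

/-! ### The profile `w` and positivity of `β` -/

lemma w1_eq (x : ℝ) : w1 x = 1 / (√2 * Real.cosh (x / √2) ^ 2) := by
  have h2 : (0 : ℝ) < √2 := by positivity
  have hc := (Real.cosh_pos (x / √2)).ne'
  have hlin : HasDerivAt (fun s : ℝ => s / √2) (1 / √2) x := (hasDerivAt_id x).div_const _
  have hquot := hlin.sinh.div hlin.cosh hc
  have hw : w = (fun s => Real.sinh (s / √2)) / (fun s => Real.cosh (s / √2)) := by
    funext s
    simp [w, Real.tanh_eq_sinh_div_cosh]
  rw [w1, hw, hquot.deriv]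
  have hid := Real.cosh_sq (x / √2)
  field_simp
  linarith

lemma one_sub_w_sq (x : ℝ) : 1 - w x ^ 2 = 1 / Real.cosh (x / √2) ^ 2 := by
  have hc := (Real.cosh_pos (x / √2)).ne'
  have hid := Real.cosh_sq (x / √2)
  rw [w, Real.tanh_eq_sinh_div_cosh]
  field_simp
  linarith

lemma w1_pos (x : ℝ) : 0 < w1 x := by
  have hc := Real.cosh_pos (x / √2)
  rw [w1_eq]
  positivity

lemma continuous_w1 : Continuous w1 := by
  have hw : w1 = fun x => 1 / (√2 * Real.cosh (x / √2) ^ 2) := funext w1_eq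
  rw [hw]
  refine continuous_const.div (by fun_prop) fun x => ?_
  have hc := Real.cosh_pos (x / √2)
  positivity

lemma one_div_cosh_sq_le (y : ℝ) : 1 / Real.cosh y ^ 2 ≤ 4 * exp (-(2 * |y|)) := by
  have hc : exp |y| / 2 ≤ Real.cosh y := by
    rw [← Real.cosh_abs, Real.cosh_eq]
    have := exp_pos (-|y|)
    linarith
  have he := exp_pos |y|
  have h4 : 4 * exp (-(2 * |y|)) = 1 / (exp |y| / 2) ^ 2 := by
    rw [exp_neg, two_mul, exp_add]
    field_simp
    norm_num
  rw [h4]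
  gcongr

lemma two_mul_abs_div_sqrt_two (x : ℝ) : 2 * |x / √2| = √2 * |x| := by
  have h2 : (0 : ℝ) < √2 := by positivity
  have hs : √2 * √2 = 2 := Real.mul_self_sqrt (by norm_num)
  rw [abs_div, abs_of_pos h2]
  field_simp
  rw [sq, hs]
  ring

lemma w1_le (x : ℝ) : w1 x ≤ 4 * exp (-(√2 * |x|)) := by
  have h1 : (1 : ℝ) ≤ √2 := Real.one_le_sqrt.mpr (by norm_num)
  have hc := Real.cosh_pos (x / √2)
  rw [← two_mul_abs_div_sqrt_two, w1_eq]
  refine le_trans ?_ (one_div_cosh_sq_le _)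
  gcongr
  nlinarith [sq_nonneg (Real.cosh (x / √2))]

lemma integrable_exp_neg_mul_abs {a : ℝ} (ha : 0 < a) :
    Integrable fun x : ℝ => exp (-(a * |x|)) := by
  rw [← integrableOn_univ, ← Set.Iic_union_Ioi (a := (0 : ℝ))]
  refine IntegrableOn.union ?_ ?_
  · refine (integrableOn_exp_mul_Iic ha 0).congr_fun (fun x hx => ?_) measurableSet_Iic
    simp only [abs_of_nonpos (show x ≤ 0 from hx)]
    ring_nf
  · refine (integrableOn_exp_mul_Ioi (neg_lt_zero.mpr ha) 0).congr_fun
      (fun x hx => ?_) measurableSet_Ioi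
    simp only [abs_of_pos (show 0 < x from hx)]
    ring_nf

lemma integral_pos_of_continuous_of_le {g : ℝ → ℝ} {K a : ℝ} (ha : 0 < a) (hg : Continuous g)
    (hpos : ∀ x, 0 < g x) (hle : ∀ x, g x ≤ K * exp (-(a * |x|))) : 0 < ∫ x, g x := by
  have hI_int : Integrable g := by
    refine ((integrable_exp_neg_mul_abs ha).const_mul K).mono' hg.aestronglyMeasurable ?_
    filter_upwards with x
    rw [Real.norm_eq_abs, abs_of_pos (hpos x)]
    exact hle x
  rw [integral_pos_iff_support_of_nonneg (fun x => (hpos x).le) hI_int]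
  have hs : Function.support g = Set.univ :=
    Set.eq_univ_of_forall fun x => (hpos x).ne'
  simp [hs]

lemma β_pos : 0 < β := by
  have h2 : (0 : ℝ) < √2 := by positivity
  refine div_pos (mul_pos (by norm_num) ?_) ?_
  · refine integral_pos_of_continuous_of_le (K := 16) h2 ?_ (fun x => ?_) (fun x => ?_)
    · have hw : (fun x => 1 - w x ^ 2) = fun x => 1 / Real.cosh (x / √2) ^ 2 :=
        funext one_sub_w_sq
      have hwc : Continuous fun x => 1 - w x ^ 2 := by
        rw [hw]
        refine continuous_const.div (by fun_prop) fun x => ?_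
        have hc := Real.cosh_pos (x / √2)
        positivity
      exact (Continuous.mul (by fun_prop) hwc).mul continuous_w1
    · have hc := Real.cosh_pos (x / √2)
      rw [one_sub_w_sq]
      exact mul_pos (by positivity) (w1_pos x)
    · have hb : 1 - w x ^ 2 ≤ 4 * exp (-(√2 * |x|)) := by
        rw [one_sub_w_sq, ← two_mul_abs_div_sqrt_two]
        exact one_div_cosh_sq_le _
      have hx : exp (√2 * x) ≤ exp (√2 * |x|) := by
        gcongr
        exact le_abs_self x
      calc exp (√2 * x) * (1 - w x ^ 2) * w1 x
          ≤ exp (√2 * |x|) * (4 * exp (-(√2 * |x|))) * (4 * exp (-(√2 * |x|))) := by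
            have hnn : 0 ≤ 1 - w x ^ 2 := by
              rw [one_sub_w_sq]
              positivity
            exact mul_le_mul (mul_le_mul hx hb hnn (exp_pos _).le) (w1_le x) (w1_pos x).le
              (by positivity)
        _ = 16 * exp (-(√2 * |x|)) := by
            have : exp (√2 * |x|) * exp (-(√2 * |x|)) = 1 := by rw [← exp_add]; simp
            linear_combination 16 * exp (-(√2 * |x|)) * this
  · refine integral_pos_of_continuous_of_le (K := 16) h2 (continuous_w1.pow 2)
      (fun x => pow_pos (w1_pos x) 2) (fun x => ?_)
    have hle1 : exp (-(√2 * |x|)) ≤ 1 := exp_le_one_iff.mpr (by simp)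
    have := w1_le x
    have := w1_pos x
    nlinarith [exp_pos (-(√2 * |x|))]

/-! ### Integrals of powers against exponential weights -/

lemma pow_le_mul_pow_mul_exp {a : ℝ} (ha : 0 < a) (ℓ : ℕ) :
    ∃ K > 0, ∀ m ≥ 1, ∀ r ≥ 0, r ^ ℓ ≤ K * m ^ ℓ * exp (a * |r - m|) := by
  refine ⟨ℓ.factorial / a ^ ℓ * exp a, by positivity, fun m hm r hr => ?_⟩
  have hrm : r ≤ m * (1 + |r - m|) := by
    nlinarith [le_abs_self (r - m), abs_nonneg (r - m)]
  have hexp : (a * (1 + |r - m|)) ^ ℓ ≤ ℓ.factorial * exp (a * (1 + |r - m|)) := by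
    have h := pow_div_factorial_le_exp (x := a * (1 + |r - m|)) (by positivity) ℓ
    rw [div_le_iff₀ (by positivity)] at h
    linarith
  calc r ^ ℓ ≤ (m * (1 + |r - m|)) ^ ℓ := by gcongr
    _ = m ^ ℓ / a ^ ℓ * (a * (1 + |r - m|)) ^ ℓ := by
        rw [mul_pow, mul_pow]
        field_simp
    _ ≤ m ^ ℓ / a ^ ℓ * (ℓ.factorial * exp (a * (1 + |r - m|))) := by gcongr
    _ = ℓ.factorial / a ^ ℓ * exp a * m ^ ℓ * exp (a * |r - m|) := by
        rw [mul_add, exp_add, mul_one]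
        ring

lemma exists_integral_pow_mul_exp_le {δ : ℝ} (hδ : 0 < δ) (ℓ : ℕ) :
    ∃ K > 0, ∀ m ≥ 1,
      IntegrableOn (fun r : ℝ => r ^ ℓ * exp (-(δ * |r - m|))) (Set.Ioi 1) ∧
      ∫ r in Set.Ioi (1 : ℝ), r ^ ℓ * exp (-(δ * |r - m|)) ≤ K * m ^ ℓ := by
  obtain ⟨K, hK, hpow⟩ := pow_le_mul_pow_mul_exp (half_pos hδ) ℓ
  have hI_int := integrable_exp_neg_mul_abs (half_pos hδ)
  have hI : 0 ≤ ∫ x : ℝ, exp (-(δ / 2 * |x|)) := integral_nonneg fun x => (exp_pos _).le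
  refine ⟨K * ((∫ x : ℝ, exp (-(δ / 2 * |x|))) + 1), by positivity, fun m hm => ?_⟩
  have hmint : Integrable fun r : ℝ => K * m ^ ℓ * exp (-(δ / 2 * |r - m|)) :=
    (hI_int.comp_sub_right m).const_mul _
  have hle : ∀ r : ℝ, 0 ≤ r →
      r ^ ℓ * exp (-(δ * |r - m|)) ≤ K * m ^ ℓ * exp (-(δ / 2 * |r - m|)) := by
    intro r hr
    calc r ^ ℓ * exp (-(δ * |r - m|))
        ≤ K * m ^ ℓ * exp (δ / 2 * |r - m|) * exp (-(δ * |r - m|)) := by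
          gcongr
          exact hpow m hm r hr
      _ = K * m ^ ℓ * exp (-(δ / 2 * |r - m|)) := by
          rw [mul_assoc, ← exp_add]
          ring_nf
  have hnn : ∀ r : ℝ, 0 ≤ r → 0 ≤ r ^ ℓ * exp (-(δ * |r - m|)) := fun r hr => by positivity
  have hioi : ∀ᵐ r ∂(volume.restrict (Set.Ioi (1 : ℝ))), (0 : ℝ) ≤ r := by
    filter_upwards [ae_restrict_mem measurableSet_Ioi] with r hr
    exact zero_le_one.trans (le_of_lt hr)
  have hon : IntegrableOn (fun r : ℝ => r ^ ℓ * exp (-(δ * |r - m|))) (Set.Ioi 1) := by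
    refine Integrable.mono' hmint.integrableOn (by fun_prop) ?_
    filter_upwards [hioi] with r hr
    rw [Real.norm_eq_abs, abs_of_nonneg (hnn r hr)]
    exact hle r hr
  refine ⟨hon, ?_⟩
  calc ∫ r in Set.Ioi (1 : ℝ), r ^ ℓ * exp (-(δ * |r - m|))
      ≤ ∫ r in Set.Ioi (1 : ℝ), K * m ^ ℓ * exp (-(δ / 2 * |r - m|)) := by
        refine integral_mono_ae hon hmint.integrableOn ?_
        filter_upwards [hioi] with r hr using hle r hr
    _ ≤ ∫ r : ℝ, K * m ^ ℓ * exp (-(δ / 2 * |r - m|)) := by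
        refine setIntegral_le_integral hmint ?_
        filter_upwards with r
        positivity
    _ = K * m ^ ℓ * ∫ x : ℝ, exp (-(δ / 2 * |x|)) := by
        rw [integral_const_mul]
        congr 1
        exact integral_sub_right_eq_self (fun x : ℝ => exp (-(δ / 2 * |x|))) m
    _ ≤ K * ((∫ x : ℝ, exp (-(δ / 2 * |x|))) + 1) * m ^ ℓ := by
        have : 0 < K * m ^ ℓ := by positivity
        nlinarith

/-! ### Asymptotics of `η` -/

section Eta

variable {N k : ℕ} {η : ℝ → ℝ} {γ : ℕ → ℝ}

lemma Setting.hasDerivAt_eta_neg (S : Setting N k η γ) {s : ℝ} (hs : 1 ≤ s) :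
    HasDerivAt (fun s => η (-s)) (β * exp (-√2 * η (-s)) - η (-s) / (2 * s)) s := by
  have hd := ((S.hηdiff (-s) (by linarith)).hasDerivAt).comp s (hasDerivAt_neg s)
  have hode := S.hηode (-s) (by linarith)
  refine hd.congr_deriv ?_
  have : η (-s) / (2 * -s) = -(η (-s) / (2 * s)) := by
    rw [mul_neg, div_neg]
  linarith

lemma Setting.eta_neg_nonneg (S : Setting N k η γ) {s : ℝ} (hs : 1 ≤ s) : 0 ≤ η (-s) := by
  have hfence := image_le_of_deriv_right_lt_deriv_boundary (a := 1) (b := s)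
    (f := fun s => -η (-s)) (f' := fun s => -(β * exp (-√2 * η (-s)) - η (-s) / (2 * s)))
    (B := fun _ => 0) (B' := fun _ => 0)
    (fun x hx => (S.hasDerivAt_eta_neg hx.1).neg.continuousAt.continuousWithinAt)
    (fun x hx => (S.hasDerivAt_eta_neg hx.1).neg.hasDerivWithinAt)
    (by simp [S.hηinit]) (fun x => hasDerivAt_const x 0)
    (fun x _ hx0 => by
      have h0 : η (-x) = 0 := by simpa using hx0
      simpa [h0] using β_pos)
  have := hfence (Set.right_mem_Icc.mpr hs)
  simpa using this

lemma Setting.hasDerivAt_exp_eta_neg (S : Setting N k η γ) {s : ℝ} (hs : 1 ≤ s) :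
    HasDerivAt (fun s => exp (√2 * η (-s)))
      (√2 * β - exp (√2 * η (-s)) * (√2 * η (-s)) / (2 * s)) s := by
  convert ((S.hasDerivAt_eta_neg hs).const_mul √2).exp using 1
  have : exp (√2 * η (-s)) * exp (-√2 * η (-s)) = 1 := by rw [← exp_add]; simp
  linear_combination (-√2 * β) * this

lemma Setting.exp_eta_neg_le (S : Setting N k η γ) {s : ℝ} (hs : 1 ≤ s) :
    exp (√2 * η (-s)) ≤ 1 + (√2 * β + 1) * (s - 1) := by
  refine image_le_of_deriv_right_lt_deriv_boundary (a := 1) (b := s)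
    (B := fun s => 1 + (√2 * β + 1) * (s - 1)) (B' := fun _ => √2 * β + 1)
    (fun x hx => (S.hasDerivAt_exp_eta_neg hx.1).continuousAt.continuousWithinAt)
    (fun x hx => (S.hasDerivAt_exp_eta_neg hx.1).hasDerivWithinAt)
    (by simp [S.hηinit]) (fun x => ?_) (fun x hx _ => ?_) (Set.right_mem_Icc.mpr hs)
  · simpa using (((hasDerivAt_id x).sub_const 1).const_mul (√2 * β + 1)).const_add 1
  · have h0 := S.eta_neg_nonneg hx.1
    have hx0 : 0 < x := by linarith [hx.1]
    have : 0 ≤ exp (√2 * η (-x)) * (√2 * η (-x)) / (2 * x) := by positivity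
    linarith

lemma Setting.exists_div_log_le_exp_eta_neg (S : Setting N k η γ) :
    ∃ c > 0, ∀ s ≥ 2, c * (s / log s) ≤ exp (√2 * η (-s)) := by
  have hB : 0 < √2 * β := mul_pos (by positivity) β_pos
  have hlog2 : 0.69 < log 2 := by linarith [Real.log_two_gt_d9]
  refine ⟨min (√2 * β / 4) (1 / 4), by positivity, fun s hs => ?_⟩
  set c := min (√2 * β / 4) (1 / 4) with hc
  have hc0 : 0 < c := by positivity
  have hcB : c ≤ √2 * β / 4 := min_le_left _ _
  have hc4 : c ≤ 1 / 4 := min_le_right _ _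
  have hlog : ∀ x : ℝ, 2 ≤ x → 0.69 < log x := fun x hx =>
    hlog2.trans_le (Real.log_le_log (by norm_num) hx)
  have hder : ∀ x : ℝ, 2 ≤ x → HasDerivAt (fun x => c * (x / log x))
      (c * ((1 * log x - x * x⁻¹) / log x ^ 2)) x := fun x hx =>
    ((hasDerivAt_id x).div (Real.hasDerivAt_log (by linarith))
      (by linarith [hlog x hx])).const_mul c
  refine image_le_of_deriv_right_lt_deriv_boundary' (a := 2) (b := s)
    (f := fun x => c * (x / log x)) (B := fun s => exp (√2 * η (-s)))
    (fun x hx => (hder x hx.1).continuousAt.continuousWithinAt)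
    (fun x hx => (hder x hx.1).hasDerivWithinAt) ?_
    (fun x hx => (S.hasDerivAt_exp_eta_neg
      (one_le_two.trans hx.1)).continuousAt.continuousWithinAt)
    (fun x hx => (S.hasDerivAt_exp_eta_neg (one_le_two.trans hx.1)).hasDerivWithinAt)
    (fun x hx hcontact => ?_) (Set.right_mem_Icc.mpr hs)
  · have h1 : 1 ≤ exp (√2 * η (-2)) :=
      one_le_exp (mul_nonneg (by positivity) (S.eta_neg_nonneg one_le_two))
    have h2 : c * (2 / log 2) ≤ 1 := by
      rw [← mul_div_assoc, div_le_one (by linarith)]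
      linarith
    exact h2.trans h1
  · have hx2 := hx.1
    have hL := hlog x hx2
    have hL0 : 0 < log x := by linarith
    have hx0 : 0 < x := by linarith
    have hupper : √2 * η (-x) ≤ log x := by
      rw [← Real.log_exp (√2 * η (-x)), ← hcontact]
      refine Real.log_le_log (by positivity) ?_
      rw [← mul_div_assoc, div_le_iff₀ hL0]
      nlinarith
    have hder_le : c * ((1 * log x - x * x⁻¹) / log x ^ 2) ≤ 2 * c := by
      rw [mul_comm 2 c]
      refine mul_le_mul_of_nonneg_left ?_ hc0.le
      rw [div_le_iff₀ (by positivity), mul_inv_cancel₀ hx0.ne']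
      nlinarith
    have hdecay : exp (√2 * η (-x)) * (√2 * η (-x)) / (2 * x) ≤ c / 2 := by
      rw [← hcontact]
      calc c * (x / log x) * (√2 * η (-x)) / (2 * x)
          ≤ c * (x / log x) * log x / (2 * x) := by gcongr
        _ = c / 2 := by field_simp
    linarith

lemma Setting.exists_exp_neg_eta_le (S : Setting N k η γ) {p : ℝ} (hp : 0 < p) :
    ∃ K > 0, ∀ t ≤ -2, exp (-(√2 * p * η t)) ≤ K * (log |t| / |t|) ^ p := by
  obtain ⟨c, hc, hle⟩ := S.exists_div_log_le_exp_eta_neg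
  refine ⟨c⁻¹ ^ p, by positivity, fun t ht => ?_⟩
  have habs : |t| = -t := abs_of_nonpos (by linarith)
  have h2 : 2 ≤ |t| := by linarith
  have hlog : 0 < log |t| := Real.log_pos (by linarith)
  have hbound : exp (-(√2 * η t)) ≤ c⁻¹ * (log |t| / |t|) := by
    have h := hle |t| h2
    rw [habs, neg_neg, ← habs] at h
    rw [exp_neg]
    calc (exp (√2 * η t))⁻¹ ≤ (c * (|t| / log |t|))⁻¹ := by gcongr
      _ = c⁻¹ * (log |t| / |t|) := by rw [mul_inv, inv_div]
  calc exp (-(√2 * p * η t)) = exp (-(√2 * η t)) ^ p := by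
        rw [← exp_mul]
        ring_nf
    _ ≤ (c⁻¹ * (log |t| / |t|)) ^ p := by gcongr
    _ = c⁻¹ ^ p * (log |t| / |t|) ^ p := Real.mul_rpow (by positivity) (by positivity)

lemma Setting.tendsto_eta (S : Setting N k η γ) : Tendsto η atBot atTop := by
  obtain ⟨c, hc, hle⟩ := S.exists_div_log_le_exp_eta_neg
  have hdiv : Tendsto (fun s : ℝ => s / log s) atTop atTop := by
    have h0 : Tendsto (fun s : ℝ => log s / s) atTop (𝓝[>] 0) := by
      refine tendsto_nhdsWithin_iff.mpr ⟨?_, ?_⟩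
      · simpa using Real.isLittleO_log_id_atTop.tendsto_div_nhds_zero
      · filter_upwards [eventually_gt_atTop 1] with s hs
        exact div_pos (Real.log_pos hs) (by linarith)
    exact h0.inv_tendsto_nhdsGT_zero.congr fun s => inv_div _ _
  have hexp : Tendsto (fun s => exp (√2 * η (-s))) atTop atTop :=
    tendsto_atTop_mono' _ (by
      filter_upwards [eventually_ge_atTop 2] with s hs using hle s hs)
      (hdiv.const_mul_atTop hc)
  have hlin : Tendsto (fun s => √2 * η (-s)) atTop atTop := Real.tendsto_exp_comp_atTop.mp hexp
  have hη : Tendsto (fun s => η (-s)) atTop atTop :=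
    (tendsto_const_mul_atTop_of_pos (by positivity)).mp hlin
  simpa [Function.comp_def] using hη.comp tendsto_neg_atBot_atTop

lemma Setting.eventually_mul_eta_add_le_sqrt (S : Setting N k η γ) (A D : ℝ) (hA : 0 ≤ A) :
    ∀ᶠ t in atBot, A * η t + D ≤ √(-t) := by
  have hB : 0 < √2 * β + 1 := by have := mul_pos (show (0:ℝ) < √2 by positivity) β_pos; linarith
  have hlogo : ∀ᶠ s : ℝ in atTop, (A + 1) * log s ≤ √s / 2 := by
    have h := (isLittleO_log_rpow_atTop (r := 1 / 2) (by norm_num)).bound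
      (c := 1 / (2 * (A + 1))) (by positivity)
    filter_upwards [h, eventually_ge_atTop 1] with s hs h1
    rw [Real.norm_of_nonneg (Real.log_nonneg h1), Real.norm_of_nonneg (by positivity),
      ← Real.sqrt_eq_rpow] at hs
    calc (A + 1) * log s ≤ (A + 1) * (1 / (2 * (A + 1)) * √s) := by gcongr
      _ = √s / 2 := by field_simp
  have hsqrt : ∀ᶠ s : ℝ in atTop, 2 * (A * log (√2 * β + 1) + D) ≤ √s :=
    Real.tendsto_sqrt_atTop.eventually_ge_atTop _
  have hmain : ∀ᶠ s : ℝ in atTop, A * η (-s) + D ≤ √s := by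
    filter_upwards [hlogo, hsqrt, eventually_ge_atTop 1] with s h1 h2 hs
    have hs0 : 0 < s := by linarith
    have hη0 := S.eta_neg_nonneg hs
    have h3 : exp (√2 * η (-s)) ≤ (√2 * β + 1) * s := by
      have := S.exp_eta_neg_le hs
      have := mul_pos (show (0:ℝ) < √2 by positivity) β_pos
      nlinarith
    have h4 : √2 * η (-s) ≤ log (√2 * β + 1) + log s := by
      rw [← Real.log_mul hB.ne' hs0.ne', Real.le_log_iff_exp_le (by positivity)]
      exact h3
    have h5 : η (-s) ≤ √2 * η (-s) :=
      le_mul_of_one_le_left hη0 (Real.one_le_sqrt.mpr (by norm_num))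
    have h6 : 0 ≤ log s := Real.log_nonneg hs
    nlinarith [mul_le_mul_of_nonneg_left (h5.trans h4) hA]
  have := tendsto_neg_atBot_atTop.eventually hmain
  simpa using this

end Eta

/-! ### Pointwise bounds for the weight `Φ` -/

lemma IsPhi.exists_cell {N k : ℕ} {η : ℝ → ℝ} {γ : ℕ → ℝ} {σ : ℝ} {Φ : ℝ → ℝ → ℝ}
    (hΦ : IsPhi N k η γ σ Φ) (hk : 2 ≤ k) (t : ℝ) {r : ℝ} (hr : 1 < r) :
    ∃ i, 1 ≤ i ∧ i ≤ k ∧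
      (2 ≤ i → (rho0 N k η γ i t + rho0 N k η γ (i - 1) t) / 2 < r) ∧
      (i < k → r ≤ (rho0 N k η γ i t + rho0 N k η γ (i + 1) t) / 2) ∧
      Φ t r = (if 2 ≤ i then exp (σ * (-r + rho0 N k η γ (i - 1) t)) else 0) +
        (if i < k then exp (σ * (r - rho0 N k η γ (i + 1) t)) else 0) := by
  classical
  have hex : ∃ i, 1 ≤ i ∧ (i < k → r ≤ (rho0 N k η γ i t + rho0 N k η γ (i + 1) t) / 2) :=
    ⟨k, by omega, fun hlt => absurd hlt (lt_irrefl k)⟩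
  obtain ⟨h1, hup⟩ := Nat.find_spec hex
  have hmin := fun m => Nat.find_min hex (m := m)
  have hle : Nat.find hex ≤ k :=
    Nat.find_min' hex ⟨by omega, fun hlt => absurd hlt (lt_irrefl k)⟩
  set i := Nat.find hex
  have hlow : 2 ≤ i → (rho0 N k η γ i t + rho0 N k η γ (i - 1) t) / 2 < r := by
    intro h2
    by_contra hcon
    refine hmin (i - 1) (by omega) ⟨by omega, fun _ => ?_⟩
    rw [Nat.sub_add_cancel h1]
    linarith
  refine ⟨i, h1, hle, hlow, hup, ?_⟩
  rcases Nat.lt_or_ge i 2 with hi | hi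
  · have hi1 : i = 1 := by omega
    have hik : i < k := by omega
    rw [if_neg (by omega), if_pos hik, zero_add]
    have hrle := hup hik
    rw [hi1] at hrle ⊢
    exact hΦ.1 t r hr hrle
  · rw [if_pos hi]
    rcases lt_or_eq_of_le hle with hik | hik
    · rw [if_pos hik]
      exact hΦ.2.1 t r i hi hik (hlow hi) (hup hik)
    · rw [if_neg (by omega), add_zero]
      have hr' := hlow hi
      rw [hik] at hr' ⊢
      exact hΦ.2.2 t r hr'

/-- At time `t` the centers `ρ⁰_1(t), …, ρ⁰_k(t)` are at least `1` and increasing, with consecutive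
gaps that differ from `η(t)` by at most `G`. -/
structure Separated (N k : ℕ) (η : ℝ → ℝ) (γ : ℕ → ℝ) (G t : ℝ) : Prop where
  le_eta : G ≤ η t
  gap : ∀ i, 1 ≤ i → i < k → |rho0 N k η γ (i + 1) t - rho0 N k η γ i t - η t| ≤ G
  one_le : ∀ i, 1 ≤ i → i ≤ k → 1 ≤ rho0 N k η γ i t

section Weight

variable {N k : ℕ} {η : ℝ → ℝ} {γ : ℕ → ℝ} {σ G t : ℝ} {Φ : ℝ → ℝ → ℝ}

lemma Separated.mono (hsep : Separated N k η γ G t) {i j : ℕ} (hi : 1 ≤ i) (hij : i ≤ j)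
    (hj : j ≤ k) : rho0 N k η γ i t ≤ rho0 N k η γ j t := by
  induction j, hij using Nat.le_induction with
  | base => exact le_rfl
  | succ j hij ih =>
    have hgap := abs_le.mp (hsep.gap j (by omega) (by omega))
    have := hsep.le_eta
    linarith [ih (by omega), hgap.1]

lemma IsPhi.nonneg (hΦ : IsPhi N k η γ σ Φ) (hk : 2 ≤ k) (t : ℝ) {r : ℝ} (hr : 1 < r) :
    0 ≤ Φ t r := by
  obtain ⟨i, -, -, -, -, hval⟩ := hΦ.exists_cell hk t hr
  rw [hval]
  positivity

lemma IsPhi.le_sum_midpoints (hΦ : IsPhi N k η γ σ Φ) (hk : 2 ≤ k) (hσ : 0 < σ)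
    (hsep : Separated N k η γ G t) {r : ℝ} (hr : 1 < r) :
    Φ t r ≤ 2 * exp (σ * G / 2) * exp (-(σ / 2 * η t)) * ∑ i ∈ Finset.Ico 1 k,
      exp (-(σ * |r - (rho0 N k η γ i t + rho0 N k η γ (i + 1) t) / 2|)) := by
  obtain ⟨i, h1, hik, hlow, hup, hval⟩ := hΦ.exists_cell hk t hr
  set F : ℕ → ℝ := fun i =>
    exp (-(σ * |r - (rho0 N k η γ i t + rho0 N k η γ (i + 1) t) / 2|)) with hF
  have hFsum : ∀ i ∈ Finset.Ico 1 k, F i ≤ ∑ i ∈ Finset.Ico 1 k, F i := fun i hi =>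
    Finset.single_le_sum (f := F) (fun j _ => (exp_pos _).le) hi
  have hsum0 : 0 ≤ ∑ i ∈ Finset.Ico 1 k, F i := Finset.sum_nonneg fun j _ => (exp_pos _).le
  set E := exp (σ * G / 2) * exp (-(σ / 2 * η t)) with hE
  have hE0 : 0 < E := by positivity
  have hleft : (if 2 ≤ i then exp (σ * (-r + rho0 N k η γ (i - 1) t)) else 0) ≤
      E * ∑ i ∈ Finset.Ico 1 k, F i := by
    split_ifs with h2
    · obtain ⟨m, rfl⟩ : ∃ m, i = m + 1 := ⟨i - 1, by omega⟩
      have hm := hFsum m (Finset.mem_Ico.mpr ⟨by omega, by omega⟩)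
      refine le_trans ?_ (mul_le_mul_of_nonneg_left hm hE0.le)
      have hr' := hlow h2
      have hgap := (abs_le.mp (hsep.gap m (by omega) (by omega))).1
      simp only [Nat.add_sub_cancel] at hr' ⊢
      rw [hE, hF, ← exp_add, ← exp_add, exp_le_exp, abs_of_pos (by linarith)]
      nlinarith
    · positivity
  have hright : (if i < k then exp (σ * (r - rho0 N k η γ (i + 1) t)) else 0) ≤
      E * ∑ i ∈ Finset.Ico 1 k, F i := by
    split_ifs with h2
    · have hm := hFsum i (Finset.mem_Ico.mpr ⟨h1, h2⟩)
      refine le_trans ?_ (mul_le_mul_of_nonneg_left hm hE0.le)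
      have hr' := hup h2
      have hgap := (abs_le.mp (hsep.gap i h1 h2)).1
      rw [hE, hF, ← exp_add, ← exp_add, exp_le_exp, abs_of_nonpos (by linarith)]
      nlinarith
    · positivity
  rw [hval]
  linarith

lemma IsPhi.le_exp_abs_sub (hΦ : IsPhi N k η γ σ Φ) (hk : 2 ≤ k) (hσ : 0 < σ)
    (hsep : Separated N k η γ G t) {r : ℝ} (hr : 1 < r) {j : ℕ} (hj1 : 1 ≤ j) (hjk : j ≤ k) :
    Φ t r ≤ 2 * exp (σ * G) * exp (-(σ * η t)) * exp (σ * |r - rho0 N k η γ j t|) := by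
  obtain ⟨i, h1, hik, hlow, hup, hval⟩ := hΦ.exists_cell hk t hr
  have hnear : |r - rho0 N k η γ i t| ≤ |r - rho0 N k η γ j t| := by
    rcases le_total (rho0 N k η γ i t) r with hri | hri
    · rw [abs_of_nonneg (by linarith)]
      rcases le_or_gt j i with hji | hji
      · exact le_trans (by linarith [hsep.mono hj1 hji hik]) (le_abs_self _)
      · have := hup (by omega)
        have := hsep.mono (i := i + 1) (by omega) hji hjk
        exact le_trans (by linarith) (neg_le_abs _)
    · rw [abs_of_nonpos (by linarith)]
      rcases le_or_gt i j with hij | hij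
      · exact le_trans (by linarith [hsep.mono h1 hij hjk]) (neg_le_abs _)
      · have := hlow (by omega)
        have := hsep.mono (j := i - 1) hj1 (by omega) (by omega)
        exact le_trans (by linarith) (le_abs_self _)
  set E := exp (σ * G) * exp (-(σ * η t)) * exp (σ * |r - rho0 N k η γ j t|) with hE
  have hleft : (if 2 ≤ i then exp (σ * (-r + rho0 N k η γ (i - 1) t)) else 0) ≤ E := by
    split_ifs with h2
    · obtain ⟨m, rfl⟩ : ∃ m, i = m + 1 := ⟨i - 1, by omega⟩
      have hgap := (abs_le.mp (hsep.gap m (by omega) (by omega))).1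
      have habs := neg_le_abs (r - rho0 N k η γ (m + 1) t)
      simp only [Nat.add_sub_cancel]
      rw [hE, ← exp_add, ← exp_add, exp_le_exp]
      nlinarith
    · positivity
  have hright : (if i < k then exp (σ * (r - rho0 N k η γ (i + 1) t)) else 0) ≤ E := by
    split_ifs with h2
    · have hgap := (abs_le.mp (hsep.gap i h1 h2)).1
      have habs := le_abs_self (r - rho0 N k η γ i t)
      rw [hE, ← exp_add, ← exp_add, exp_le_exp]
      nlinarith
    · positivity
  rw [hval]
  linarith

/-! ### Integral estimates -/

lemma IsPhi.integral_le (hΦ : IsPhi N k η γ σ Φ) (S : Setting N k η γ) (hσ : 0 < σ)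
    (G : ℝ) (ℓ : ℕ) :
    ∃ C > 0, ∀ t ≤ -2, Separated N k η γ G t →
      (∫ r in Set.Ioi (1 : ℝ), r ^ ℓ * Φ t r) ≤
        C * ∑ i ∈ Finset.Icc 1 k,
          rho0 N k η γ i t ^ ℓ * (log |t| / |t|) ^ (σ / (2 * √2)) := by
  obtain ⟨K, hK, hI_int⟩ := exists_integral_pow_mul_exp_le hσ ℓ
  obtain ⟨K', hK', hexp⟩ := S.exists_exp_neg_eta_le (p := σ / (2 * √2)) (by positivity)
  refine ⟨2 * exp (σ * G / 2) * K' * K, by positivity, fun t ht hsep => ?_⟩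
  set m : ℕ → ℝ := fun i => (rho0 N k η γ i t + rho0 N k η γ (i + 1) t) / 2 with hm
  have hm1 : ∀ i ∈ Finset.Ico 1 k, 1 ≤ m i := fun i hi => by
    obtain ⟨h1, h2⟩ := Finset.mem_Ico.mp hi
    have := hsep.one_le i h1 h2.le
    have := hsep.one_le (i + 1) (by omega) h2
    simp only [hm]
    linarith
  have hη : exp (-(σ / 2 * η t)) ≤ K' * (log |t| / |t|) ^ (σ / (2 * √2)) := by
    convert hexp t ht using 4
    field_simp
  set E := 2 * exp (σ * G / 2) * exp (-(σ / 2 * η t)) with hE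
  have hmid : ∑ i ∈ Finset.Ico 1 k, m i ^ ℓ ≤ ∑ i ∈ Finset.Icc 1 k, rho0 N k η γ i t ^ ℓ := by
    calc ∑ i ∈ Finset.Ico 1 k, m i ^ ℓ
        ≤ ∑ i ∈ Finset.Ico 1 k, rho0 N k η γ (i + 1) t ^ ℓ := by
          refine Finset.sum_le_sum fun i hi => ?_
          obtain ⟨h1, h2⟩ := Finset.mem_Ico.mp hi
          have := hm1 i hi
          refine pow_le_pow_left₀ (by linarith) ?_ ℓ
          have := hsep.mono h1 (Nat.le_succ i) h2
          simp only [hm]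
          linarith
      _ = ∑ i ∈ Finset.Ico 2 (k + 1), rho0 N k η γ i t ^ ℓ :=
          Finset.sum_Ico_add' (fun i => rho0 N k η γ i t ^ ℓ) 1 k 1
      _ ≤ ∑ i ∈ Finset.Icc 1 k, rho0 N k η γ i t ^ ℓ := by
          refine Finset.sum_le_sum_of_subset_of_nonneg (fun i hi => ?_) fun i hi _ => ?_
          · simp only [Finset.mem_Ico, Finset.mem_Icc] at hi ⊢
            omega
          · obtain ⟨h1, h2⟩ := Finset.mem_Icc.mp hi
            have := hsep.one_le i h1 h2
            positivity
  have hsum0 : 0 ≤ ∑ i ∈ Finset.Ico 1 k, m i ^ ℓ :=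
    Finset.sum_nonneg fun i hi => by
      have := hm1 i hi
      positivity
  calc ∫ r in Set.Ioi (1 : ℝ), r ^ ℓ * Φ t r
      ≤ ∫ r in Set.Ioi (1 : ℝ), E * ∑ i ∈ Finset.Ico 1 k, r ^ ℓ * exp (-(σ * |r - m i|)) := by
        refine integral_mono_of_nonneg ?_ ?_ ?_
        · filter_upwards [ae_restrict_mem measurableSet_Ioi] with r hr
          have hr0 : 0 ≤ r := zero_le_one.trans (le_of_lt hr)
          exact mul_nonneg (pow_nonneg hr0 ℓ) (hΦ.nonneg S.hk t hr)
        · exact (integrable_finsetSum _ fun i hi => (hI_int (m i) (hm1 i hi)).1).const_mul E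
        · filter_upwards [ae_restrict_mem measurableSet_Ioi] with r hr
          have hr0 : 0 ≤ r := zero_le_one.trans (le_of_lt hr)
          have hle := hΦ.le_sum_midpoints S.hk hσ hsep hr
          rw [← Finset.mul_sum, mul_left_comm]
          exact mul_le_mul_of_nonneg_left hle (pow_nonneg hr0 ℓ)
    _ = E * ∑ i ∈ Finset.Ico 1 k, ∫ r in Set.Ioi (1 : ℝ), r ^ ℓ * exp (-(σ * |r - m i|)) := by
        rw [integral_const_mul, integral_finsetSum _ fun i hi => (hI_int (m i) (hm1 i hi)).1]
    _ ≤ E * ∑ i ∈ Finset.Ico 1 k, K * m i ^ ℓ := by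
        gcongr with i hi
        exact (hI_int (m i) (hm1 i hi)).2
    _ = E * (K * ∑ i ∈ Finset.Ico 1 k, m i ^ ℓ) := by rw [← Finset.mul_sum]
    _ ≤ 2 * exp (σ * G / 2) * (K' * (log |t| / |t|) ^ (σ / (2 * √2))) *
          (K * ∑ i ∈ Finset.Icc 1 k, rho0 N k η γ i t ^ ℓ) := by
        rw [hE]
        gcongr
        exact mul_nonneg (by positivity) ((exp_pos _).le.trans hη)
    _ = 2 * exp (σ * G / 2) * K' * K * ∑ i ∈ Finset.Icc 1 k,
          rho0 N k η γ i t ^ ℓ * (log |t| / |t|) ^ (σ / (2 * √2)) := by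
        rw [← Finset.sum_mul]
        ring

lemma IsPhi.integral_mul_w1_le (hΦ : IsPhi N k η γ σ Φ) (S : Setting N k η γ)
    (hσ : σ ∈ Set.Ioo 0 √2) (G A : ℝ) (ℓ : ℕ) {h : ℕ → ℝ → ℝ} :
    ∃ C > 0, ∀ t ≤ -2, Separated N k η γ G t → ∀ j ∈ Finset.Icc 1 k, |h j t| ≤ A →
      (∫ r in Set.Ioi (1 : ℝ), r ^ ℓ * Φ t r * w1 (r - rho N k η γ h j t)) ≤
        C * rho0 N k η γ j t ^ ℓ * (log |t| / |t|) ^ (σ / √2) := by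
  obtain ⟨hσ0, hσ2⟩ := hσ
  obtain ⟨K, hK, hI_int⟩ := exists_integral_pow_mul_exp_le (sub_pos.mpr hσ2) ℓ
  obtain ⟨K', hK', hexp⟩ := S.exists_exp_neg_eta_le (p := σ / √2) (by positivity)
  refine ⟨8 * exp (σ * G) * exp (√2 * A) * K' * K, by positivity, fun t ht hsep j hj hA => ?_⟩
  obtain ⟨hj1, hjk⟩ := Finset.mem_Icc.mp hj
  have hρ := hsep.one_le j hj1 hjk
  have hη : exp (-(σ * η t)) ≤ K' * (log |t| / |t|) ^ (σ / √2) := by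
    convert hexp t ht using 4
    field_simp
  set E := 8 * exp (σ * G) * exp (√2 * A) * exp (-(σ * η t)) with hE
  have hpoint : ∀ r > 1, Φ t r * w1 (r - rho N k η γ h j t) ≤
      E * exp (-((√2 - σ) * |r - rho0 N k η γ j t|)) := by
    intro r hr
    have hΦle := hΦ.le_exp_abs_sub S.hk hσ0 hsep hr hj1 hjk
    have htri : |r - rho0 N k η γ j t| ≤ |r - rho N k η γ h j t| + A := by
      have := abs_add_le (r - rho N k η γ h j t) (h j t)
      rw [show r - rho N k η γ h j t + h j t = r - rho0 N k η γ j t by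
        rw [rho]; ring] at this
      linarith
    have hw : w1 (r - rho N k η γ h j t) ≤
        4 * (exp (√2 * A) * exp (-(√2 * |r - rho0 N k η γ j t|))) := by
      refine (w1_le _).trans ?_
      rw [← exp_add]
      gcongr
      nlinarith [show (0 : ℝ) < √2 by positivity]
    calc Φ t r * w1 (r - rho N k η γ h j t)
        ≤ (2 * exp (σ * G) * exp (-(σ * η t)) * exp (σ * |r - rho0 N k η γ j t|)) *
            (4 * (exp (√2 * A) * exp (-(√2 * |r - rho0 N k η γ j t|)))) :=
          mul_le_mul hΦle hw (w1_pos _).le (by positivity)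
      _ = E * (exp (σ * |r - rho0 N k η γ j t|) * exp (-(√2 * |r - rho0 N k η γ j t|))) := by
          rw [hE]
          ring
      _ = E * exp (-((√2 - σ) * |r - rho0 N k η γ j t|)) := by
          rw [← exp_add]
          ring_nf
  obtain ⟨hj_int, hlej⟩ := hI_int _ hρ
  calc ∫ r in Set.Ioi (1 : ℝ), r ^ ℓ * Φ t r * w1 (r - rho N k η γ h j t)
      ≤ ∫ r in Set.Ioi (1 : ℝ),
          E * (r ^ ℓ * exp (-((√2 - σ) * |r - rho0 N k η γ j t|))) := by
        refine integral_mono_of_nonneg ?_ (hj_int.const_mul E) ?_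
        · filter_upwards [ae_restrict_mem measurableSet_Ioi] with r hr
          have hr0 : 0 ≤ r := zero_le_one.trans (le_of_lt hr)
          exact mul_nonneg (mul_nonneg (pow_nonneg hr0 ℓ) (hΦ.nonneg S.hk t hr)) (w1_pos _).le
        · filter_upwards [ae_restrict_mem measurableSet_Ioi] with r hr
          have hr0 : 0 ≤ r := zero_le_one.trans (le_of_lt hr)
          rw [mul_assoc, mul_left_comm E]
          exact mul_le_mul_of_nonneg_left (hpoint r hr) (pow_nonneg hr0 ℓ)
    _ = E * ∫ r in Set.Ioi (1 : ℝ), r ^ ℓ * exp (-((√2 - σ) * |r - rho0 N k η γ j t|)) :=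
        integral_const_mul _ _
    _ ≤ E * (K * rho0 N k η γ j t ^ ℓ) := by gcongr
    _ ≤ 8 * exp (σ * G) * exp (√2 * A) * (K' * (log |t| / |t|) ^ (σ / √2)) *
          (K * rho0 N k η γ j t ^ ℓ) := by
        rw [hE]
        gcongr
    _ = _ := by ring

lemma Setting.eventually_separated (S : Setting N k η γ) :
    ∃ G, ∀ᶠ t in atBot, Separated N k η γ G t := by
  set Γ := ∑ i ∈ Finset.Icc 1 k, |γ i| with hΓ
  have hγ : ∀ i, 1 ≤ i → i ≤ k → |γ i| ≤ Γ := fun i h1 h2 =>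
    Finset.single_le_sum (f := fun i => |γ i|) (fun j _ => abs_nonneg _)
      (Finset.mem_Icc.mpr ⟨h1, h2⟩)
  refine ⟨2 * Γ, ?_⟩
  filter_upwards [S.tendsto_eta.eventually_ge_atTop (2 * Γ),
    S.eventually_mul_eta_add_le_sqrt k (Γ + 1) (by positivity),
    eventually_le_atBot (-1)] with t hη hsqrt ht
  refine ⟨hη, fun i h1 h2 => ?_, fun i h1 h2 => ?_⟩
  · have ha := abs_le.mp (hγ i h1 h2.le)
    have hb := abs_le.mp (hγ (i + 1) (by omega) h2)
    have hdiff : rho0 N k η γ (i + 1) t - rho0 N k η γ i t - η t = γ (i + 1) - γ i := by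
      simp only [rho0]
      push_cast
      ring
    rw [hdiff, abs_le]
    constructor <;> linarith [ha.1, ha.2, hb.1, hb.2]
  · have ha := abs_le.mp (hγ i h1 h2)
    have hη0 : 0 ≤ η t := by simpa using S.eta_neg_nonneg (s := -t) (by linarith)
    have hN : (2 : ℝ) ≤ N := by exact_mod_cast S.hN
    have hmono : √(-t) ≤ √(-2 * ((N : ℝ) - 1) * t) := Real.sqrt_le_sqrt (by nlinarith)
    have hi : (1 : ℝ) ≤ i := by exact_mod_cast h1
    have hk : (2 : ℝ) ≤ k := by exact_mod_cast S.hk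
    have hcoef : -(k : ℝ) * η t ≤ ((i : ℝ) - ((k : ℝ) + 1) / 2) * η t :=
      mul_le_mul_of_nonneg_right (by linarith) hη0
    rw [rho0]
    linarith [ha.1]

end Weight

/-- Weighted integral estimates for `Φ`: for `σ ∈ (0,√2)`, `T₀ > 2` large enough and `ℓ ≥ 0`
there is `C > 0` with `∫_1^∞ r^ℓ Φ(t,r) dr ≤ C ∑_i (ρ_i⁰(t))^ℓ (log|t|/|t|)^{σ/(2√2)}` and
`∫_1^∞ r^ℓ Φ(t,r) w'(r-ρ_j(t)) dr ≤ C (ρ_j⁰(t))^ℓ (log|t|/|t|)^{σ/√2}`. -/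
theorem stmt_9 (N k : ℕ) (η : ℝ → ℝ) (γ : ℕ → ℝ) (S : Setting N k η γ)
    (σ : ℝ) (hσ : σ ∈ Set.Ioo 0 (Real.sqrt 2)) (ℓ : ℕ)
    (h : ℕ → ℝ → ℝ) (hh : SmallH k 2 h)
    (Φ : ℝ → ℝ → ℝ) (hΦ : IsPhi N k η γ σ Φ) :
    ∃ T₀ > (2 : ℝ), ∃ C > (0 : ℝ), ∀ t ≤ -T₀,
      ((∫ r in Set.Ioi (1 : ℝ), r ^ ℓ * Φ t r) ≤
        C * ∑ i ∈ Finset.Icc 1 k,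
          rho0 N k η γ i t ^ ℓ * (Real.log |t| / |t|) ^ (σ / (2 * Real.sqrt 2))) ∧
      ∀ j ∈ Finset.Icc 1 k,
        (∫ r in Set.Ioi (1 : ℝ), r ^ ℓ * Φ t r * w1 (r - rho N k η γ h j t)) ≤
          C * rho0 N k η γ j t ^ ℓ * (Real.log |t| / |t|) ^ (σ / Real.sqrt 2) := by
  obtain ⟨G, hG⟩ := S.eventually_separated
  obtain ⟨T, hT⟩ := eventually_atBot.mp hG
  obtain ⟨-, A, -, -, hA, -⟩ := hh
  obtain ⟨C₁, hC₁, hle₁⟩ := hΦ.integral_le S hσ.1 G ℓ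
  obtain ⟨C₂, hC₂, hle₂⟩ := hΦ.integral_mul_w1_le S hσ G A ℓ (h := h)
  refine ⟨max 3 (-T), lt_max_of_lt_left (by norm_num), max C₁ C₂, lt_max_of_lt_left hC₁,
    fun t ht => ?_⟩
  have ht3 : t ≤ -2 := by linarith [le_max_left 3 (-T)]
  have hsep := hT t (by linarith [le_max_right 3 (-T)])
  have habs : 1 ≤ |t| := by rw [abs_of_nonpos (by linarith)]; linarith
  have hlog : 0 ≤ log |t| := Real.log_nonneg habs
  have hρ : ∀ i ∈ Finset.Icc 1 k, 0 ≤ rho0 N k η γ i t := fun i hi => by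
    obtain ⟨h1, h2⟩ := Finset.mem_Icc.mp hi
    linarith [hsep.one_le i h1 h2]
  refine ⟨(hle₁ t ht3 hsep).trans ?_,
    fun j hj => (hle₂ t ht3 hsep j hj (hA j hj t ht3)).trans ?_⟩
  · refine mul_le_mul_of_nonneg_right (le_max_left _ _) (Finset.sum_nonneg fun i hi => ?_)
    have := hρ i hi
    positivity
  · have := hρ j hj
    gcongr
    exact le_max_right _ _
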